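/- arXiv:2510.04446 — 6 statements merged into one kernel-verified Lean document; each statement's English description precedes it below -/
import Mathlib

section
/- Let F : ℝ^d → ℝ be differentiable with L-Lipschitz continuous gradient (L > 0), let h : ℝ^d → ℝ ∪ {+∞} be proper, lower semicontinuous and convex, and let γ > 0, ε > 0, x ∈ ℝ^d. If there exists g ∈ ∂_{ε/(2L)}F(x) with ‖𝒢_{γh}(x, g)‖ ≤ ε/2, then ‖𝒢_{γh}(x, ∇F(x))‖ ≤ ε. -/
/-!
The proximal operator of a convex function is nonexpansive: perturbing a minimizer towards another
point yields a variational inequality, and adding those of `p = prox z` and `q = prox w` gives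
`‖q - p‖ ^ 2 ≤ ⟪w - z, q - p⟫`. Hence `g ↦ 𝒢(x, g)` is `1`-Lipschitz. Since the gradient is
`L`-Lipschitz, every gradient on the ball of radius `ε / (2 * L)` about `x` lies in the closed ball
of radius `ε / 2` about `∇F(x)`, which is closed and convex and so contains the Goldstein
subdifferential. The triangle inequality concludes.
-/

open MeasureTheory
open scoped RealInnerProductSpace

noncomputable section

/-- A minimizer of `h + ‖· - z‖ ^ 2 / (2 * γ)` lies in the effective domain of a proper `h`. -/
lemma prox_ne_top {E : Type*} [NormedAddCommGroup E] {h : E → EReal}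
    (hproper : ∃ z, h z ≠ ⊤) {γ : ℝ} {z p : E}
    (hp : IsMinOn (fun y => h y + ((‖y - z‖ ^ 2 / (2 * γ) : ℝ) : EReal)) Set.univ p) :
    h p ≠ ⊤ := by
  intro htop
  obtain ⟨y, hy⟩ := hproper
  have hle := isMinOn_iff.1 hp y (Set.mem_univ y)
  simp only [htop, EReal.top_add_coe, top_le_iff] at hle
  exact EReal.add_ne_top hy (EReal.coe_ne_top _) hle

/-- First-order inequality obtained by moving a fraction `t` of the way from the minimizer `p`
to `q`, before letting `t` tend to `0`. -/
lemma prox_variational {E : Type*} [NormedAddCommGroup E] [InnerProductSpace ℝ E] {h : E → EReal}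
    (hconv : ∀ p q : E, ∀ a b : ℝ, 0 ≤ a → 0 ≤ b → a + b = 1 →
      h (a • p + b • q) ≤ (a : EReal) * h p + (b : EReal) * h q)
    {γ : ℝ} (hγ : 0 < γ) {z p q : E} {a b : ℝ} (ha : h p = a) (hb : h q = b)
    (hp : IsMinOn (fun y => h y + ((‖y - z‖ ^ 2 / (2 * γ) : ℝ) : EReal)) Set.univ p)
    {t : ℝ} (ht0 : 0 < t) (ht1 : t ≤ 1) :
    2 * γ * (a - b) ≤ 2 * ⟪p - z, q - p⟫ + t * ‖q - p‖ ^ 2 := by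
  have hc := hconv p q (1 - t) t (by linarith) ht0.le (by ring)
  have hle := isMinOn_iff.1 hp ((1 - t) • p + t • q) (Set.mem_univ _)
  have hle' := hle.trans (add_le_add_left hc _)
  rw [ha, hb] at hle'
  norm_cast at hle'
  have hpt : (1 - t) • p + t • q - z = (p - z) + t • (q - p) := by module
  rw [hpt, norm_add_sq_real, norm_smul, inner_smul_right, Real.norm_of_nonneg ht0.le] at hle'
  have hγ2 : 0 < 2 * γ := by positivity
  have hmul := mul_le_mul_of_nonneg_left hle' hγ2.le
  rw [mul_add, mul_add, mul_div_cancel₀ _ hγ2.ne', mul_div_cancel₀ _ hγ2.ne'] at hmul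
  refine le_of_mul_le_mul_left ?_ ht0
  nlinarith [hmul]

/-- The proximal operator of a proper convex function is nonexpansive. -/
lemma prox_nonexpansive {E : Type*} [NormedAddCommGroup E] [InnerProductSpace ℝ E] {h : E → EReal}
    (hbot : ∀ z, h z ≠ ⊥)
    (hconv : ∀ p q : E, ∀ a b : ℝ, 0 ≤ a → 0 ≤ b → a + b = 1 →
      h (a • p + b • q) ≤ (a : EReal) * h p + (b : EReal) * h q)
    (hproper : ∃ z, h z ≠ ⊤) {γ : ℝ} (hγ : 0 < γ) {z w p q : E}
    (hp : IsMinOn (fun y => h y + ((‖y - z‖ ^ 2 / (2 * γ) : ℝ) : EReal)) Set.univ p)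
    (hq : IsMinOn (fun y => h y + ((‖y - w‖ ^ 2 / (2 * γ) : ℝ) : EReal)) Set.univ q) :
    ‖q - p‖ ≤ ‖w - z‖ := by
  have ha := (EReal.coe_toReal (prox_ne_top hproper hp) (hbot p)).symm
  have hb := (EReal.coe_toReal (prox_ne_top hproper hq) (hbot q)).symm
  have key : ∀ t : ℝ, 0 < t → t ≤ 1 →
      ‖q - p‖ ^ 2 ≤ ⟪w - z, q - p⟫ + t * ‖q - p‖ ^ 2 := by
    intro t ht0 ht1
    have h1 := prox_variational hconv hγ ha hb hp ht0 ht1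
    have h2 := prox_variational hconv hγ hb ha hq ht0 ht1
    have e1 : ⟪q - w, p - q⟫ = -⟪q - w, q - p⟫ := by rw [← inner_neg_right, neg_sub]
    have e2 : ⟪p - z, q - p⟫ - ⟪q - w, q - p⟫ = ⟪w - z, q - p⟫ - ‖q - p‖ ^ 2 := by
      rw [← real_inner_self_eq_norm_sq, ← inner_sub_left, ← inner_sub_left]
      congr 1
      abel
    rw [norm_sub_rev p q, e1] at h2
    linarith
  have hlim : ‖q - p‖ ^ 2 ≤ ⟪w - z, q - p⟫ := by
    by_contra! hlt
    by_cases hD : ‖q - p‖ = 0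
    · have : ⟪w - z, q - p⟫ = 0 := by rw [norm_eq_zero.1 hD, inner_zero_right]
      rw [hD, this] at hlt
      norm_num at hlt
    · have hD2 : 0 < ‖q - p‖ ^ 2 := by positivity
      -- A step small enough that the quadratic term is at most half of the assumed gap.
      set s := (‖q - p‖ ^ 2 - ⟪w - z, q - p⟫) / (2 * ‖q - p‖ ^ 2) with hs
      have hs0 : 0 < s := div_pos (by linarith) (by positivity)
      have hk := key (min s 1) (lt_min hs0 one_pos) (min_le_right _ _)
      have hm : min s 1 * ‖q - p‖ ^ 2 ≤ s * ‖q - p‖ ^ 2 := by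
        gcongr
        exact min_le_left _ _
      have hs' : s * ‖q - p‖ ^ 2 = (‖q - p‖ ^ 2 - ⟪w - z, q - p⟫) / 2 := by
        rw [hs]; field_simp
      linarith
  have hCS := real_inner_le_norm (w - z) (q - p)
  nlinarith [norm_nonneg (q - p), norm_nonneg (w - z)]

theorem stmt1 {d : ℕ}
    (F : EuclideanSpace ℝ (Fin d) → ℝ) (L : ℝ) (hL : 0 < L)
    (hFdiff : Differentiable ℝ F)
    (hFgrad : ∀ p q : EuclideanSpace ℝ (Fin d), ‖gradient F p - gradient F q‖ ≤ L * ‖p - q‖)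
    (h : EuclideanSpace ℝ (Fin d) → EReal)
    (hbot : ∀ z, h z ≠ ⊥)
    (hlsc : LowerSemicontinuous h)
    (hconv : ∀ p q : EuclideanSpace ℝ (Fin d), ∀ a b : ℝ, 0 ≤ a → 0 ≤ b → a + b = 1 →
      h (a • p + b • q) ≤ (a : EReal) * h p + (b : EReal) * h q)
    (hproper : ∃ z, h z ≠ ⊤)
    (γ ε : ℝ) (hγ : 0 < γ) (hε : 0 < ε)
    (x : EuclideanSpace ℝ (Fin d))
    (prox : EuclideanSpace ℝ (Fin d) → EuclideanSpace ℝ (Fin d))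
    (hprox : ∀ z, IsMinOn (fun y => h y + ((‖y - z‖ ^ 2 / (2 * γ) : ℝ) : EReal)) Set.univ (prox z))
    (hexists : ∃ g ∈ closure (convexHull ℝ (gradient F '' Metric.closedBall x (ε / (2 * L)))),
      ‖γ⁻¹ • (x - prox (x - γ • g))‖ ≤ ε / 2) :
    ‖γ⁻¹ • (x - prox (x - γ • gradient F x))‖ ≤ ε := by
  obtain ⟨g, hg, hgn⟩ := hexists
  have hball : g ∈ Metric.closedBall (gradient F x) (ε / 2) := by
    refine closure_minimal (convexHull_min ?_ (convex_closedBall _ _))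
      Metric.isClosed_closedBall hg
    rintro _ ⟨y, hy, rfl⟩
    rw [mem_closedBall_iff_norm] at hy ⊢
    calc ‖gradient F y - gradient F x‖ ≤ L * ‖y - x‖ := hFgrad y x
      _ ≤ L * (ε / (2 * L)) := by gcongr
      _ = ε / 2 := by field_simp
  rw [mem_closedBall_iff_norm] at hball
  have hne := prox_nonexpansive hbot hconv hproper hγ
    (hprox (x - γ • gradient F x)) (hprox (x - γ • g))
  have hdist : ‖(x - γ • g) - (x - γ • gradient F x)‖ = γ * ‖g - gradient F x‖ := by
    rw [show (x - γ • g) - (x - γ • gradient F x) = (-γ) • (g - gradient F x) by module,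
      norm_smul, norm_neg, Real.norm_of_nonneg hγ.le]
  rw [hdist] at hne
  have hsplit : γ⁻¹ • (x - prox (x - γ • gradient F x)) = γ⁻¹ • (x - prox (x - γ • g))
      + γ⁻¹ • (prox (x - γ • g) - prox (x - γ • gradient F x)) := by module
  have hsecond : ‖γ⁻¹ • (prox (x - γ • g) - prox (x - γ • gradient F x))‖ ≤ ε / 2 := by
    rw [norm_smul, Real.norm_of_nonneg (inv_pos.2 hγ).le, inv_mul_le_iff₀ hγ]
    exact hne.trans (by gcongr)
  rw [hsplit]
  exact (norm_add_le _ _).trans (by linarith)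
end
end

section
/- Let F : ℝ^d → ℝ be G-Lipschitz continuous and differentiable everywhere, let h : ℝ^d → ℝ ∪ {+∞} be proper, lower semicontinuous and convex, and let γ > 0, δ > 0, ε ≥ 0. If the randomized smoothing F_δ is differentiable at x ∈ ℝ^d and ‖𝒢_{γh}(x, ∇F_δ(x))‖ ≤ ε, then there exists g ∈ ∂_δF(x) with ‖𝒢_{γh}(x, g)‖ ≤ ε (i.e., x is a (γ, δ, ε)-proximal Goldstein stationary point). -/
/-!
The witness is the gradient of the smoothing itself. Since `F` is differentiable everywhere and
Lipschitz, dominated convergence allows differentiation under the integral sign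
(`hasFDerivAt_integral_of_dominated_loc_of_lip`), so `∇F_δ(x) = ∫ ∇F(x + δu) dμ(u)`. Almost every
`x + δu` lies in the closed `δ`-ball around `x`, so this is an average of points of the
closed convex hull of the gradients of `F` on that ball, hence belongs to it
(`Convex.integral_mem`).
-/

open MeasureTheory
open scoped RealInnerProductSpace

noncomputable section

/-- The gradient of an average of translates of a differentiable Lipschitz function is the average
of the translated gradients, which are integrable. -/
theorem gradient_smoothing {d : ℕ}
    (F : EuclideanSpace ℝ (Fin d) → ℝ) (G : ℝ)
    (hF : ∀ p q : EuclideanSpace ℝ (Fin d), |F p - F q| ≤ G * ‖p - q‖)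
    (hFdiff : Differentiable ℝ F) (δ : ℝ)
    (μ : Measure (EuclideanSpace ℝ (Fin d))) [IsProbabilityMeasure μ]
    (hμsphere : ∀ᵐ u ∂μ, ‖u‖ = 1) (x : EuclideanSpace ℝ (Fin d)) :
    Integrable (fun u => gradient F (x + δ • u)) μ ∧
      gradient (fun z => ∫ u, F (z + δ • u) ∂μ) x = ∫ u, gradient F (x + δ • u) ∂μ := by
  have hcont : Continuous F := hFdiff.continuous
  -- On the unit sphere the integrand is bounded, being Lipschitz.
  have hint : Integrable (fun u => F (x + δ • u)) μ := by
    refine Integrable.mono' (integrable_const (|F x| + G * |δ|))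
      (by fun_prop : Continuous fun u => F (x + δ • u)).aestronglyMeasurable ?_
    filter_upwards [hμsphere] with u hu
    have h1 := hF (x + δ • u) x
    rw [add_sub_cancel_left, norm_smul, hu, mul_one, Real.norm_eq_abs] at h1
    have h2 := abs_sub_abs_le_abs_sub (F (x + δ • u)) (F x)
    rw [Real.norm_eq_abs]
    linarith
  have hmeas : AEStronglyMeasurable (fun u => fderiv ℝ F (x + δ • u)) μ :=
    ((measurable_fderiv ℝ F).comp
      (by fun_prop : Continuous fun u : EuclideanSpace ℝ (Fin d) =>
        x + δ • u).measurable).aestronglyMeasurable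
  obtain ⟨hI, hD⟩ := hasFDerivAt_integral_of_dominated_loc_of_lip
    (μ := μ) (𝕜 := ℝ) (F := fun z u => F (z + δ • u))
    (F' := fun u => fderiv ℝ F (x + δ • u)) (x₀ := x) (bound := fun _ => |G|)
    (s := Metric.ball x 1) (Metric.ball_mem_nhds x one_pos)
    (Filter.Eventually.of_forall fun z =>
      (by fun_prop : Continuous fun u => F (z + δ • u)).aestronglyMeasurable)
    hint hmeas
    (Filter.Eventually.of_forall fun u => by
      refine LipschitzOnWith.of_dist_le_mul fun p _ q _ => ?_
      have h1 := hF (p + δ • u) (q + δ • u)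
      rw [add_sub_add_right_eq_sub] at h1
      simp only [dist_eq_norm, Real.coe_nnabs, abs_abs]
      exact h1.trans (mul_le_mul_of_nonneg_right (le_abs_self G) (norm_nonneg _)))
    (integrable_const _)
    (Filter.Eventually.of_forall fun u =>
      (hasFDerivAt_comp_add_right (δ • u)).2 (hFdiff (x + δ • u)).hasFDerivAt)
  let T := (InnerProductSpace.toDual ℝ (EuclideanSpace ℝ (Fin d))).symm
  refine ⟨T.toContinuousLinearEquiv.toContinuousLinearMap.integrable_comp hI, ?_⟩
  simp only [gradient]
  rw [hD.fderiv]
  exact (T.toContinuousLinearEquiv.integral_comp_comm _).symm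

theorem stmt2 {d : ℕ}
    (F : EuclideanSpace ℝ (Fin d) → ℝ) (G : ℝ) (hG : 0 < G)
    (hF : ∀ p q : EuclideanSpace ℝ (Fin d), |F p - F q| ≤ G * ‖p - q‖)
    (hFdiff : Differentiable ℝ F)
    (h : EuclideanSpace ℝ (Fin d) → EReal)
    (hbot : ∀ z, h z ≠ ⊥)
    (hlsc : LowerSemicontinuous h)
    (hconv : ∀ p q : EuclideanSpace ℝ (Fin d), ∀ a b : ℝ, 0 ≤ a → 0 ≤ b → a + b = 1 →
      h (a • p + b • q) ≤ (a : EReal) * h p + (b : EReal) * h q)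
    (hproper : ∃ z, h z ≠ ⊤)
    (γ δ ε : ℝ) (hγ : 0 < γ) (hδ : 0 < δ) (hε : 0 ≤ ε)
    (μ : Measure (EuclideanSpace ℝ (Fin d))) [IsProbabilityMeasure μ]
    (hμsphere : ∀ᵐ u ∂μ, ‖u‖ = 1)
    (hμrot : ∀ Q : EuclideanSpace ℝ (Fin d) ≃ₗᵢ[ℝ] EuclideanSpace ℝ (Fin d), μ.map Q = μ)
    (Fδ : EuclideanSpace ℝ (Fin d) → ℝ) (hFδ : Fδ = fun z => ∫ u, F (z + δ • u) ∂μ)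
    (x : EuclideanSpace ℝ (Fin d))
    (hFδdiff : DifferentiableAt ℝ Fδ x)
    (prox : EuclideanSpace ℝ (Fin d) → EuclideanSpace ℝ (Fin d))
    (hprox : ∀ z, IsMinOn (fun y => h y + ((‖y - z‖ ^ 2 / (2 * γ) : ℝ) : EReal)) Set.univ (prox z))
    (hsmall : ‖γ⁻¹ • (x - prox (x - γ • gradient Fδ x))‖ ≤ ε) :
    ∃ g ∈ closure (convexHull ℝ (gradient F '' Metric.closedBall x δ)),
      ‖γ⁻¹ • (x - prox (x - γ • g))‖ ≤ ε := by
  refine ⟨gradient Fδ x, ?_, hsmall⟩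
  obtain ⟨hI, hgrad⟩ := gradient_smoothing F G hF hFdiff δ μ hμsphere x
  rw [hFδ, hgrad]
  refine (convex_convexHull ℝ _).closure.integral_mem isClosed_closure ?_ hI
  filter_upwards [hμsphere] with u hu
  refine subset_closure (subset_convexHull ℝ _ ⟨x + δ • u, ?_, rfl⟩)
  simp [norm_smul, hu, abs_of_pos hδ]
end
end

section
/- Let h satisfy the stated properness, convexity and growth assumptions with constants G, R and base point x^h. Then for every g ∈ ℝ^d with ‖g‖ ≤ G, the set argmin_{y ∈ ℝ^d} [h(y) + ⟨y, g⟩] is nonempty and is contained in the closed ball {y ∈ ℝ^d : ‖y − x^h‖ ≤ R}. -/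
/-! Outside the closed ball of radius `R` around `xh`, the growth condition beats the tilt: by
Cauchy-Schwarz `⟪z - xh, g⟫ ≥ -G ‖z - xh‖`, so `h z + ⟪z, g⟫ > h xh + ⟪xh, g⟫`. Hence every minimizer
lies in the ball, and a minimizer over the (compact) ball, which exists because `h + ⟪·, g⟫` is lower
semicontinuous, is a global minimizer. -/

open MeasureTheory
open scoped RealInnerProductSpace

noncomputable section

theorem stmt3 {d : ℕ}
    (G : ℝ) (hG : 0 < G)
    (h : EuclideanSpace ℝ (Fin d) → EReal)
    (hbot : ∀ z, h z ≠ ⊥)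
    (hlsc : LowerSemicontinuous h)
    (hconv : ∀ p q : EuclideanSpace ℝ (Fin d), ∀ a b : ℝ, 0 ≤ a → 0 ≤ b → a + b = 1 →
      h (a • p + b • q) ≤ (a : EReal) * h p + (b : EReal) * h q)
    (xh : EuclideanSpace ℝ (Fin d)) (hxh : h xh ≠ ⊤)
    (R : ℝ) (hR : 0 < R)
    (hgrowth : ∀ z, R < ‖z - xh‖ → h xh + ((G * ‖z - xh‖ : ℝ) : EReal) < h z) :
    ∀ g : EuclideanSpace ℝ (Fin d), ‖g‖ ≤ G →
      {y : EuclideanSpace ℝ (Fin d) | IsMinOn (fun z => h z + ((⟪z, g⟫ : ℝ) : EReal)) Set.univ y}.Nonempty ∧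
      ∀ y : EuclideanSpace ℝ (Fin d), IsMinOn (fun z => h z + ((⟪z, g⟫ : ℝ) : EReal)) Set.univ y →
        ‖y - xh‖ ≤ R := by
  intro g hg
  have key : ∀ z, R < ‖z - xh‖ →
      h xh + ((⟪xh, g⟫ : ℝ) : EReal) < h z + ((⟪z, g⟫ : ℝ) : EReal) := by
    intro z hz
    have h1 : -(G * ‖z - xh‖) ≤ ⟪z, g⟫ - ⟪xh, g⟫ := by
      rw [← inner_sub_left]
      have h2 := neg_le_of_abs_le (abs_real_inner_le_norm (z - xh) g)
      have h3 := mul_le_mul_of_nonneg_left hg (norm_nonneg (z - xh))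
      linarith
    have hgr := hgrowth z hz
    -- `h xh` is finite, so it can be treated as a real number; `h z` may still be `⊤`.
    lift h xh to ℝ using ⟨hxh, hbot xh⟩ with c hc
    induction hv : h z with
    | bot => exact absurd hv (hbot z)
    | top =>
      rw [EReal.top_add_coe, ← EReal.coe_add]
      exact EReal.coe_lt_top _
    | coe v =>
      rw [hv] at hgr
      norm_cast at hgr ⊢
      linarith
  have hf : LowerSemicontinuous (fun z => h z + ((⟪z, g⟫ : ℝ) : EReal)) := by
    have hin : Continuous (fun z : EuclideanSpace ℝ (Fin d) => ((⟪z, g⟫ : ℝ) : EReal)) :=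
      continuous_coe_real_ereal.comp (by fun_prop)
    refine hlsc.add' hin.lowerSemicontinuous fun z => ?_
    exact EReal.continuousAt_add (Or.inr (EReal.coe_ne_bot _)) (Or.inr (EReal.coe_ne_top _))
  refine ⟨?_, fun y hy => ?_⟩
  · obtain ⟨y, -, hy⟩ := LowerSemicontinuousOn.exists_isMinOn
      (Metric.nonempty_closedBall.2 hR.le : (Metric.closedBall xh R).Nonempty)
      (isCompact_closedBall xh R) (hf.lowerSemicontinuousOn _)
    refine ⟨y, Set.mem_ofPred.2 (isMinOn_iff.2 fun z _ => ?_)⟩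
    rcases le_or_gt ‖z - xh‖ R with hz | hz
    · exact isMinOn_iff.1 hy z (mem_closedBall_iff_norm.2 hz)
    · exact (isMinOn_iff.1 hy xh (Metric.mem_closedBall_self hR.le)).trans (key z hz).le
  · by_contra! hlt
    exact (key y hlt).not_ge (isMinOn_iff.1 hy xh (Set.mem_univ _))
end
end

section
/- Let h satisfy the stated properness, convexity and growth assumptions with constants G, R and base point x^h. Let F : ℝ^d → ℝ be differentiable with L-Lipschitz continuous gradient and with ‖∇F(z)‖ ≤ G for all z ∈ ℝ^d. Let ε > 0 and x ∈ ℝ^d, and assume that ‖y − x‖ ≤ R for every y ∈ L_h(∇F(x)). If there exists g ∈ ∂_{ε/(2RL)}F(x) with W_h(x, g) ≤ ε/2, then W_h(x, ∇F(x)) ≤ ε. -/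
/-!
Growth with slope `G ≥ ‖∇F(x)‖` makes `h + ⟪·, ∇F(x)⟫` attain its minimum at some `y`
(`exists_isMinOn_add_inner`), and this `y` realizes the supremum defining `W_h(x, ∇F(x))`. Hence
`W_h(x, ∇F(x)) = h x - h y + ⟪y - x, -g⟫ + ⟪y - x, g - ∇F(x)⟫ ≤ W_h(x, g) + ‖y - x‖ ‖g - ∇F(x)‖`.
The first term is at most `ε / 2`; in the second, `‖y - x‖ ≤ R`, and `‖g - ∇F(x)‖ ≤ ε / (2R)` because
the closed convex ball of that radius around `∇F(x)` contains all the gradients generating the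
Goldstein subdifferential (`norm_sub_le_of_mem_closure_convexHull`).
-/

open MeasureTheory
open scoped RealInnerProductSpace

noncomputable section

/-- The regularized Frank–Wolfe gap `W_h(x, g) = sup_y [h(x) − h(y) + ⟨y − x, −g⟩]`,
valued in the extended reals. -/
noncomputable def FWgap {d : ℕ} (h : EuclideanSpace ℝ (Fin d) → EReal) (x g : EuclideanSpace ℝ (Fin d)) : EReal :=
  ⨆ y : EuclideanSpace ℝ (Fin d), (h x - h y + ((⟪y - x, -g⟫ : ℝ) : EReal))

/-- The growth of `h` is at least as fast as that of the linear form `⟪·, v⟫` for `‖v‖ ≤ G`, so the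
minimum of `h + ⟪·, v⟫` over the compact ball `closedBall xh R` is global: `L_h(v)` is nonempty. -/
theorem exists_isMinOn_add_inner {d : ℕ} (G : ℝ) (h : EuclideanSpace ℝ (Fin d) → EReal)
    (hlsc : LowerSemicontinuous h)
    (xh : EuclideanSpace ℝ (Fin d)) (R : ℝ) (hR : 0 < R)
    (hgrowth : ∀ z, R < ‖z - xh‖ → h xh + ((G * ‖z - xh‖ : ℝ) : EReal) < h z)
    (v : EuclideanSpace ℝ (Fin d)) (hv : ‖v‖ ≤ G) :
    ∃ y, IsMinOn (fun z => h z + ((⟪z, v⟫ : ℝ) : EReal)) Set.univ y := by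
  have hl : LowerSemicontinuous (fun z => h z + ((⟪z, v⟫ : ℝ) : EReal)) := by
    refine hlsc.add' (Continuous.lowerSemicontinuous ?_) fun z => ?_
    · exact continuous_coe_real_ereal.comp (by fun_prop)
    · exact EReal.continuousAt_add (Or.inr (EReal.coe_ne_bot _)) (Or.inr (EReal.coe_ne_top _))
  obtain ⟨y, -, hy⟩ := (hl.lowerSemicontinuousOn _).exists_isMinOn
    (s := Metric.closedBall xh R) ⟨xh, by simp [hR.le]⟩ (isCompact_closedBall xh R)
  refine ⟨y, fun z _ => ?_⟩
  by_cases hz : ‖z - xh‖ ≤ R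
  · exact hy (by simpa [dist_eq_norm] using hz)
  have hxm : h y + ((⟪y, v⟫ : ℝ) : EReal) ≤ h xh + ((⟪xh, v⟫ : ℝ) : EReal) :=
    hy (show xh ∈ Metric.closedBall xh R by simp [hR.le])
  have hgz := hgrowth z (not_le.mp hz)
  refine le_trans hxm ?_
  show h xh + ((⟪xh, v⟫ : ℝ) : EReal) ≤ h z + ((⟪z, v⟫ : ℝ) : EReal)
  have hin : ⟪xh, v⟫ ≤ G * ‖z - xh‖ + ⟪z, v⟫ := by
    have h1 := real_inner_le_norm (xh - z) v
    rw [inner_sub_left, norm_sub_rev] at h1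
    have h2 := mul_le_mul_of_nonneg_left hv (norm_nonneg (z - xh))
    linarith
  calc h xh + ((⟪xh, v⟫ : ℝ) : EReal)
      ≤ h xh + ((G * ‖z - xh‖ + ⟪z, v⟫ : ℝ) : EReal) := by
        gcongr
    _ = h xh + ((G * ‖z - xh‖ : ℝ) : EReal) + ((⟪z, v⟫ : ℝ) : EReal) := by
        rw [EReal.coe_add, add_assoc]
    _ ≤ _ := by gcongr

/-- The Lipschitz-type bound with constant `K` at `x` confines the closed convex hull of
`f '' closedBall x (r / K)` to `closedBall (f x) r`. For `K ≤ 0` the bound makes `f`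
constant, so the junk value `r / 0 = 0` is harmless. -/
theorem norm_sub_le_of_mem_closure_convexHull {E : Type*} [NormedAddCommGroup E] [NormedSpace ℝ E]
    (f : E → E) (K r : ℝ) (hr : 0 ≤ r) (x g : E)
    (hf : ∀ p, ‖f p - f x‖ ≤ K * ‖p - x‖)
    (hg : g ∈ closure (convexHull ℝ (f '' Metric.closedBall x (r / K)))) :
    ‖g - f x‖ ≤ r := by
  have hsub : f '' Metric.closedBall x (r / K) ⊆ Metric.closedBall (f x) r := by
    rintro _ ⟨p, hp, rfl⟩
    rw [Metric.mem_closedBall, dist_eq_norm] at hp ⊢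
    refine (hf p).trans ?_
    rcases le_or_gt K 0 with hK | hK
    · exact (mul_nonpos_of_nonpos_of_nonneg hK (norm_nonneg _)).trans hr
    · rwa [le_div_iff₀' hK] at hp
  have := closure_minimal (convexHull_min hsub (convex_closedBall _ _))
    Metric.isClosed_closedBall hg
  rwa [Metric.mem_closedBall, dist_eq_norm] at this

theorem stmt4 {d : ℕ}
    (G : ℝ) (hG : 0 < G)
    (h : EuclideanSpace ℝ (Fin d) → EReal)
    (hbot : ∀ z, h z ≠ ⊥)
    (hlsc : LowerSemicontinuous h)
    (hconv : ∀ p q : EuclideanSpace ℝ (Fin d), ∀ a b : ℝ, 0 ≤ a → 0 ≤ b → a + b = 1 →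
      h (a • p + b • q) ≤ (a : EReal) * h p + (b : EReal) * h q)
    (xh : EuclideanSpace ℝ (Fin d)) (hxh : h xh ≠ ⊤)
    (R : ℝ) (hR : 0 < R)
    (hgrowth : ∀ z, R < ‖z - xh‖ → h xh + ((G * ‖z - xh‖ : ℝ) : EReal) < h z)
    (F : EuclideanSpace ℝ (Fin d) → ℝ) (L : ℝ)
    (hFdiff : Differentiable ℝ F)
    (hFgrad : ∀ p q : EuclideanSpace ℝ (Fin d), ‖gradient F p - gradient F q‖ ≤ L * ‖p - q‖)
    (hFbound : ∀ z : EuclideanSpace ℝ (Fin d), ‖gradient F z‖ ≤ G)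
    (ε : ℝ) (hε : 0 < ε)
    (x : EuclideanSpace ℝ (Fin d))
    (hLMO : ∀ y : EuclideanSpace ℝ (Fin d),
      IsMinOn (fun z => h z + ((⟪z, gradient F x⟫ : ℝ) : EReal)) Set.univ y → ‖y - x‖ ≤ R)
    (hexists : ∃ g ∈ closure (convexHull ℝ (gradient F '' Metric.closedBall x (ε / (2 * R * L)))),
      FWgap h x g ≤ ((ε / 2 : ℝ) : EReal)) :
    FWgap h x (gradient F x) ≤ (ε : EReal) := by
  obtain ⟨g, hg, hW⟩ := hexists
  have hgn : ‖g - gradient F x‖ ≤ ε / (2 * R) := by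
    refine norm_sub_le_of_mem_closure_convexHull (gradient F) L _ (by positivity) x g
      (fun p => hFgrad p x) ?_
    rwa [div_div]
  obtain ⟨y, hy⟩ := exists_isMinOn_add_inner G h hlsc xh R hR hgrowth _ (hFbound x)
  have hyR := hLMO y hy
  have hW' : ∀ z, h x - h z + ((⟪z - x, -g⟫ : ℝ) : EReal) ≤ ((ε / 2 : ℝ) : EReal) :=
    fun z => (le_iSup (fun z => h x - h z + ((⟪z - x, -g⟫ : ℝ) : EReal)) z).trans hW
  have hmin : ∀ z, h y + ((⟪y, gradient F x⟫ : ℝ) : EReal)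
      ≤ h z + ((⟪z, gradient F x⟫ : ℝ) : EReal) := fun z => hy (Set.mem_univ z)
  clear hconv hlsc hgrowth hLMO hy hW
  obtain ⟨e, he⟩ : ∃ e : ℝ, (e : EReal) = h xh := ⟨_, EReal.coe_toReal hxh (hbot xh)⟩
  -- The gap at `g` is finite, hence so is `h x`.
  have hx : h x ≠ ⊤ := by
    intro hx
    have := hW' xh
    rw [hx, ← he, EReal.top_sub_coe, EReal.top_add_coe] at this
    exact EReal.coe_ne_top _ (top_le_iff.mp this)
  have hyt : h y ≠ ⊤ := by
    intro hyt
    have := hmin xh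
    rw [hyt, ← he, EReal.top_add_coe, ← EReal.coe_add] at this
    exact EReal.coe_ne_top _ (top_le_iff.mp this)
  obtain ⟨a, ha⟩ : ∃ a : ℝ, (a : EReal) = h x := ⟨_, EReal.coe_toReal hx (hbot x)⟩
  obtain ⟨b, hb⟩ : ∃ b : ℝ, (b : EReal) = h y := ⟨_, EReal.coe_toReal hyt (hbot y)⟩
  have hWy := hW' y
  rw [← ha, ← hb] at hWy
  norm_cast at hWy
  have hCS : ⟪y - x, g - gradient F x⟫ ≤ ε / 2 := by
    calc ⟪y - x, g - gradient F x⟫ ≤ ‖y - x‖ * ‖g - gradient F x‖ := real_inner_le_norm _ _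
      _ ≤ R * (ε / (2 * R)) := by gcongr
      _ = ε / 2 := by field_simp
  refine iSup_le fun z => ?_
  by_cases hz : h z = ⊤
  · rw [hz, EReal.sub_top, EReal.bot_add]
    exact bot_le
  obtain ⟨c, hc⟩ : ∃ c : ℝ, (c : EReal) = h z := ⟨_, EReal.coe_toReal hz (hbot z)⟩
  have hm := hmin z
  rw [← hb, ← hc] at hm
  rw [← ha, ← hc]
  norm_cast at hm ⊢
  simp only [inner_sub_left, inner_sub_right, inner_neg_right] at hWy hCS ⊢
  linarith
end
end

section
/- Let F : ℝ^d → ℝ be G-Lipschitz continuous and differentiable everywhere, and let δ > 0. Then the randomized smoothing F_δ is differentiable, and for every x ∈ ℝ^d, ∇F_δ(x) ∈ ∂_δF(x), i.e., ∇F_δ(x) lies in the closed convex hull of {∇F(y) : ‖y − x‖ ≤ δ}. -/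
/-!
Since `F` is `G`-Lipschitz and everywhere differentiable, `‖∇F‖ ≤ G`, so dominated convergence
(`hasFDerivAt_integral_of_dominated_of_fderiv_le`) allows differentiation under the integral sign:
`∇F_δ(x) = ∫ ∇F(x + δu) dμ(u)`. For `μ`-almost every `u` the point `x + δu` is at distance `δ`
from `x`, so the integrand takes values in the closed convex hull of the gradients of `F` over
the ball, and the average of such values against a probability measure stays in that closed convex
set (`Convex.integral_mem`).
-/

open MeasureTheory
open scoped RealInnerProductSpace

noncomputable section

/-- Differentiation under the integral sign, in gradient form: the gradient of the smoothing is the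
average of the gradients. Integrability is recorded too, so that the average is not a junk value. -/
theorem hasGradientAt_smoothing {d : ℕ} {F : EuclideanSpace ℝ (Fin d) → ℝ} {G : ℝ} (hG : 0 < G)
    (hF : ∀ p q : EuclideanSpace ℝ (Fin d), |F p - F q| ≤ G * ‖p - q‖)
    (hFdiff : Differentiable ℝ F) (δ : ℝ)
    (μ : Measure (EuclideanSpace ℝ (Fin d))) [IsProbabilityMeasure μ]
    (hμ : ∀ᵐ u ∂μ, ‖u‖ = 1) (x : EuclideanSpace ℝ (Fin d)) :
    Integrable (fun u => gradient F (x + δ • u)) μ ∧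
      HasGradientAt (fun z => ∫ u, F (z + δ • u) ∂μ) (∫ u, gradient F (x + δ • u) ∂μ) x := by
  have hbound : ∀ y, ‖fderiv ℝ F y‖ ≤ G := by
    intro y
    have hL : LipschitzWith ⟨G, hG.le⟩ F :=
      LipschitzWith.of_dist_le_mul fun p q => by
        rw [Real.dist_eq, dist_eq_norm]
        exact hF p q
    exact norm_fderiv_le_of_lipschitz ℝ hL
  have hshift : ∀ z : EuclideanSpace ℝ (Fin d), Measurable fun u => z + δ • u := fun z => by
    fun_prop
  have hmeas : ∀ z, AEStronglyMeasurable (fun u => F (z + δ • u)) μ := fun z =>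
    (hFdiff.continuous.measurable.comp (hshift z)).aestronglyMeasurable
  have hmeas' : AEStronglyMeasurable (fun u => fderiv ℝ F (x + δ • u)) μ :=
    ((measurable_fderiv ℝ F).comp (hshift x)).aestronglyMeasurable
  have hint' : Integrable (fun u => fderiv ℝ F (x + δ • u)) μ :=
    Integrable.of_bound hmeas' G (.of_forall fun u => hbound _)
  -- The Lipschitz bound makes `F` bounded on the sphere of radius `|δ|` about `x`.
  have hint : Integrable (fun u => F (x + δ • u)) μ := by
    refine Integrable.of_bound (hmeas x) (|F x| + G * |δ|) ?_
    filter_upwards [hμ] with u hu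
    have h := hF (x + δ • u) x
    rw [add_sub_cancel_left, norm_smul, hu, mul_one, Real.norm_eq_abs] at h
    have h2 := abs_sub_abs_le_abs_sub (F (x + δ • u)) (F x)
    rw [Real.norm_eq_abs]
    linarith
  have hgrad : Integrable (fun u => gradient F (x + δ • u)) μ := by
    refine Integrable.of_bound ?_ G (.of_forall fun u => ?_)
    · exact (InnerProductSpace.toDual ℝ
        (EuclideanSpace ℝ (Fin d))).symm.continuous.comp_aestronglyMeasurable hmeas'
    · rw [gradient, LinearIsometryEquiv.norm_map]
      exact hbound _
  have key : HasFDerivAt (fun z => ∫ u, F (z + δ • u) ∂μ)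
      (∫ u, fderiv ℝ F (x + δ • u) ∂μ) x := by
    refine hasFDerivAt_integral_of_dominated_of_fderiv_le (bound := fun _ => G)
      (F' := fun z u => fderiv ℝ F (z + δ • u)) Filter.univ_mem
      (.of_forall hmeas) hint hmeas' (.of_forall fun u z _ => hbound _)
      (integrable_const G) (.of_forall fun u z _ => ?_)
    exact (hasFDerivAt_comp_add_right (δ • u)).2 (hFdiff (z + δ • u)).hasFDerivAt
  refine ⟨hgrad, ?_⟩
  rw [hasGradientAt_iff_hasFDerivAt]
  have heq : InnerProductSpace.toDual ℝ _ (∫ u, gradient F (x + δ • u) ∂μ) =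
      ∫ u, fderiv ℝ F (x + δ • u) ∂μ := by
    refine ContinuousLinearMap.ext fun v => ?_
    rw [ContinuousLinearMap.integral_apply hint', InnerProductSpace.toDual_apply_apply,
      real_inner_comm, ← integral_inner hgrad v]
    refine integral_congr_ae (.of_forall fun u => ?_)
    simp only [gradient]
    rw [real_inner_comm, InnerProductSpace.toDual_symm_apply]
  rw [heq]
  exact key

theorem stmt10 {d : ℕ}
    (F : EuclideanSpace ℝ (Fin d) → ℝ) (G : ℝ) (hG : 0 < G)
    (hF : ∀ p q : EuclideanSpace ℝ (Fin d), |F p - F q| ≤ G * ‖p - q‖)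
    (hFdiff : Differentiable ℝ F)
    (δ : ℝ) (hδ : 0 < δ)
    (μ : Measure (EuclideanSpace ℝ (Fin d))) [IsProbabilityMeasure μ]
    (hμsphere : ∀ᵐ u ∂μ, ‖u‖ = 1)
    (hμrot : ∀ Q : EuclideanSpace ℝ (Fin d) ≃ₗᵢ[ℝ] EuclideanSpace ℝ (Fin d), μ.map Q = μ)
    (Fδ : EuclideanSpace ℝ (Fin d) → ℝ) (hFδ : Fδ = fun z => ∫ u, F (z + δ • u) ∂μ) :
    Differentiable ℝ Fδ ∧
      ∀ x : EuclideanSpace ℝ (Fin d), gradient Fδ x ∈ closure (convexHull ℝ (gradient F '' Metric.closedBall x δ)) := by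
  subst hFδ
  have key := hasGradientAt_smoothing hG hF hFdiff δ μ hμsphere
  refine ⟨fun x => (key x).2.differentiableAt, fun x => ?_⟩
  rw [(key x).2.gradient]
  refine (convex_convexHull ℝ _).closure.integral_mem isClosed_closure ?_ (key x).1
  filter_upwards [hμsphere] with u hu
  refine subset_closure (subset_convexHull ℝ _ ⟨x + δ • u, ?_, rfl⟩)
  rw [Metric.mem_closedBall, dist_eq_norm, add_sub_cancel_left, norm_smul, hu, mul_one,
    Real.norm_of_nonneg hδ.le]
end
end

section
/- Let h satisfy the stated properness, convexity and growth assumptions with constants G, R and base point x^h, and let Φ : ℝ^d → ℝ be differentiable with ‖∇Φ(z)‖ ≤ G for all z ∈ ℝ^d. Let x ∈ ℝ^d with h(x) < +∞, let g ∈ ℝ^d, and let y ∈ L_h(g) satisfy ‖y − x^h‖ ≤ R. Then ⟨∇Φ(x), y − x⟩ ≤ −W_h(x, ∇Φ(x)) + h(x) − h(y) + 2R·‖∇Φ(x) − g‖. -/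
/-!
Unfolding the gap, the claim says that `y` minimizes `h + ⟪·, ∇Φ(x)⟫` up to `2R‖∇Φ(x) - g‖`.
Against a competitor `z` in the ball of radius `R` around `xh` this follows from the minimality of
`y` for `h + ⟪·, g⟫` and Cauchy–Schwarz, since `‖y - z‖ ≤ 2R`. A competitor outside the ball is no
better than `xh` itself: the growth of `h` dominates the linear term because `‖∇Φ(x)‖ ≤ G`.
The gap is then squeezed between `0` and a real number, so the inequality in the extended reals
is one between real numbers.
-/

open MeasureTheory
open scoped RealInnerProductSpace

noncomputable section

theorem stmt15 {d : ℕ}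
    (G : ℝ) (hG : 0 < G)
    (h : EuclideanSpace ℝ (Fin d) → EReal)
    (hbot : ∀ z, h z ≠ ⊥)
    (hlsc : LowerSemicontinuous h)
    (hconv : ∀ p q : EuclideanSpace ℝ (Fin d), ∀ a b : ℝ, 0 ≤ a → 0 ≤ b → a + b = 1 →
      h (a • p + b • q) ≤ (a : EReal) * h p + (b : EReal) * h q)
    (xh : EuclideanSpace ℝ (Fin d)) (hxh : h xh ≠ ⊤)
    (R : ℝ) (hR : 0 < R)
    (hgrowth : ∀ z, R < ‖z - xh‖ → h xh + ((G * ‖z - xh‖ : ℝ) : EReal) < h z)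
    (Φ : EuclideanSpace ℝ (Fin d) → ℝ)
    (hΦdiff : Differentiable ℝ Φ)
    (hΦbound : ∀ z : EuclideanSpace ℝ (Fin d), ‖gradient Φ z‖ ≤ G)
    (x : EuclideanSpace ℝ (Fin d)) (hx : h x ≠ ⊤)
    (g : EuclideanSpace ℝ (Fin d)) (y : EuclideanSpace ℝ (Fin d))
    (hy : IsMinOn (fun z => h z + ((⟪z, g⟫ : ℝ) : EReal)) Set.univ y)
    (hyR : ‖y - xh‖ ≤ R) :
    ((⟪gradient Φ x, y - x⟫ : ℝ) : EReal) ≤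
      -(FWgap h x (gradient Φ x)) + h x - h y
        + ((2 * R * ‖gradient Φ x - g‖ : ℝ) : EReal) := by
  set v := gradient Φ x with hv
  have hvG : ‖v‖ ≤ G := hΦbound x
  have hmin : ∀ z, h y + ((⟪y, g⟫ : ℝ) : EReal) ≤ h z + ((⟪z, g⟫ : ℝ) : EReal) :=
    fun z => hy (Set.mem_univ z)
  have hytop : h y ≠ ⊤ := by
    intro hyt
    have h1 := hmin xh
    rw [hyt, EReal.top_add_coe, top_le_iff] at h1
    exact EReal.add_ne_top hxh (EReal.coe_ne_top _) h1
  obtain ⟨a, ha⟩ : ∃ a : ℝ, (a : EReal) = h x := ⟨_, EReal.coe_toReal hx (hbot x)⟩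
  obtain ⟨c, hc⟩ : ∃ c : ℝ, (c : EReal) = h y := ⟨_, EReal.coe_toReal hytop (hbot y)⟩
  obtain ⟨e, he⟩ : ∃ e : ℝ, (e : EReal) = h xh := ⟨_, EReal.coe_toReal hxh (hbot xh)⟩
  have hball : ∀ z, ∀ b : ℝ, (b : EReal) = h z → ‖z - xh‖ ≤ R →
      c + ⟪y, v⟫ ≤ b + ⟪z, v⟫ + 2 * R * ‖v - g‖ := by
    intro z b hb hz
    have h1 := hmin z
    rw [← hb, ← hc] at h1
    norm_cast at h1
    have h2 : ⟪y - z, v - g⟫ ≤ ‖y - z‖ * ‖v - g‖ := real_inner_le_norm _ _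
    have h3 : ‖y - z‖ ≤ 2 * R := by
      have := norm_sub_le_norm_sub_add_norm_sub y xh z
      rw [norm_sub_rev xh z] at this
      linarith
    have h4 := mul_le_mul_of_nonneg_right h3 (norm_nonneg (v - g))
    simp only [inner_sub_left, inner_sub_right] at h2
    linarith
  have hall : ∀ z, ∀ b : ℝ, (b : EReal) = h z →
      c + ⟪y, v⟫ ≤ b + ⟪z, v⟫ + 2 * R * ‖v - g‖ := by
    intro z b hb
    rcases le_or_gt ‖z - xh‖ R with hz | hz
    · exact hball z b hb hz
    -- Outside the ball, `h xh + ⟪xh, v⟫ ≤ h z + ⟪z, v⟫`, so the bound at `xh` suffices.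
    · have h1 := hgrowth z hz
      rw [← hb, ← he] at h1
      norm_cast at h1
      have h2 := hball xh e he (by simpa using hR.le)
      have h3 : ⟪xh - z, v⟫ ≤ ‖xh - z‖ * ‖v‖ := real_inner_le_norm _ _
      rw [norm_sub_rev] at h3
      have h4 := mul_le_mul_of_nonneg_left hvG (norm_nonneg (z - xh))
      simp only [inner_sub_left] at h3
      linarith
  have hle : FWgap h x v ≤ ((a - c - ⟪v, y - x⟫ + 2 * R * ‖v - g‖ : ℝ) : EReal) := by
    refine iSup_le fun z => ?_
    by_cases hz : h z = ⊤
    · rw [hz, EReal.sub_top, EReal.bot_add]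
      exact bot_le
    · obtain ⟨b, hb⟩ : ∃ b : ℝ, (b : EReal) = h z := ⟨_, EReal.coe_toReal hz (hbot z)⟩
      have h1 := hall z b hb
      rw [← hb, ← ha]
      norm_cast
      simp only [inner_neg_right, inner_sub_left, inner_sub_right, real_inner_comm y v,
        real_inner_comm x v] at h1 ⊢
      linarith [real_inner_comm y v, real_inner_comm x v]
  -- The term of the supremum at `x` itself is `0`.
  have hge : (0 : EReal) ≤ FWgap h x v := by
    refine le_trans (le_of_eq ?_)
      (le_iSup (fun z => h x - h z + ((⟪z - x, -v⟫ : ℝ) : EReal)) x)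
    rw [← ha]
    norm_cast
    simp
  obtain ⟨w, hw⟩ : ∃ w : ℝ, (w : EReal) = FWgap h x v :=
    ⟨_, EReal.coe_toReal (ne_top_of_le_ne_top (EReal.coe_ne_top _) hle)
      (ne_bot_of_le_ne_bot EReal.zero_ne_bot hge)⟩
  rw [← hw] at hle ⊢
  rw [← ha, ← hc]
  norm_cast at hle ⊢
  linarith
end
end
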